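/- arXiv:1808.02869 — 2 statements merged into one kernel-verified Lean document; each statement's English description precedes it below -/
import Mathlib

section
/- Let q and r be positive integers, let σ be a permutation of {1,…,r}, and suppose (X_0,…,X_{q−1}) is a tuple of pairwise disjoint subsets of {1,…,r} whose union is {1,…,r} and which satisfies σ(X_{i+1 mod q}) = X_i for every 0 ≤ i ≤ q−1. Then q divides the length of every cycle of σ, i.e. q divides the cardinality of every orbit of the cyclic group ⟨σ⟩ acting on {1,…,r}. -/
/-! If `a ∈ X i` and `σ ^ n` fixes `a`, then `a` also lies in `X (i - n)`, because each step of `σ`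
lowers the index by one; disjointness forces `n = 0` in `ZMod q`. Now take for `n` the length of the
cycle of `a`. -/

open Function Set

section IndexShift

variable {α ι : Type*} {f : α → α} {X : ι → Set α}

lemma mapsTo_iterate_of_mapsTo_add_one [AddMonoidWithOne ι]
    (hX : ∀ i, MapsTo f (X (i + 1)) (X i)) (n : ℕ) (i : ι) :
    MapsTo f^[n] (X (i + n)) (X i) := by
  induction n with
  | zero => simpa using mapsTo_id (X i)
  | succ n ih =>
    rw [iterate_succ, Nat.cast_succ, ← add_assoc]
    exact ih.comp (hX (i + n))

lemma dvd_of_isPeriodicPt_of_mapsTo_add_one [AddGroupWithOne ι] (p : ℕ) [CharP ι p]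
    (hdisj : Pairwise (Disjoint on X)) (hX : ∀ i, MapsTo f (X (i + 1)) (X i))
    {a : α} {i : ι} (ha : a ∈ X i) {n : ℕ} (hn : IsPeriodicPt f n a) : p ∣ n := by
  have ha' : a ∈ X (i - n) := by
    have h : f^[n] a ∈ X (i - n) :=
      mapsTo_iterate_of_mapsTo_add_one hX n (i - n) (by rwa [sub_add_cancel])
    rwa [hn.eq] at h
  have hi : i - n = i := hdisj.eq (not_disjoint_iff.mpr ⟨a, ha', ha⟩)
  rwa [sub_eq_self, CharP.cast_eq_zero_iff ι p] at hi

end IndexShift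

lemma isCycleOn_setOf_sameCycle {α : Type*} (σ : Equiv.Perm α) (a : α) :
    σ.IsCycleOn {b | σ.SameCycle a b} :=
  ⟨σ.bijOn fun _ => Equiv.Perm.sameCycle_apply_right, fun _ hb _ hc => hb.symm.trans hc⟩

theorem stmt6_general {α : Type*} {q : ℕ} {σ : Equiv.Perm α} {X : ZMod q → Set α}
    (hdisj : Pairwise (Disjoint on X)) (hX : ∀ i, MapsTo σ (X (i + 1)) (X i))
    {s : Finset α} (hs : σ.IsCycleOn s) {a : α} (has : a ∈ s) {i : ZMod q} (ha : a ∈ X i) :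
    q ∣ s.card := by
  have hperiod : IsPeriodicPt σ s.card a := by
    rw [IsPeriodicPt, IsFixedPt, Equiv.Perm.iterate_eq_pow]
    exact hs.pow_card_apply has
  exact dvd_of_isPeriodicPt_of_mapsTo_add_one q hdisj hX ha hperiod

/-- Let `q, r` be positive integers and `σ` a permutation of `{1,…,r}`.
If `(X_0, …, X_{q-1})` is a tuple of pairwise disjoint subsets of `{1,…,r}` whose union
is everything and such that `σ (X_{i+1}) = X_i` (indices mod `q`) for all `i`, then `q`
divides the cardinality of every orbit of `⟨σ⟩` on `{1,…,r}`, i.e. the length of every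
cycle of `σ`. -/
theorem stmt6 (q r : ℕ) (hq : 0 < q) (hr : 0 < r) (σ : Equiv.Perm (Fin r))
    (X : ZMod q → Finset (Fin r))
    (hdisj : ∀ i j : ZMod q, i ≠ j → Disjoint (X i) (X j))
    (hcover : ∀ a : Fin r, ∃ i : ZMod q, a ∈ X i)
    (hperm : ∀ i : ZMod q, (X (i + 1)).image σ = X i) :
    ∀ a : Fin r, q ∣ (Finset.univ.filter fun b => σ.SameCycle a b).card := by
  intro a
  obtain ⟨i, hi⟩ := hcover a
  exact stmt6_general (X := fun i => X i) (fun i j hij => Finset.disjoint_coe.mpr (hdisj i j hij))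
    (fun i _ hb => hperm i ▸ Finset.mem_image_of_mem σ hb)
    (by simpa using isCycleOn_setOf_sameCycle σ a) (by simp [Equiv.Perm.SameCycle.refl]) hi
end

section
/- Let q and r be positive integers, let σ be a permutation of {1,…,r}, and assume that q divides the cardinality of every orbit of the cyclic group ⟨σ⟩ acting on {1,…,r}. Then the number of tuples (X_0,…,X_{q−1}) of pairwise disjoint subsets of {1,…,r} whose union is {1,…,r} and which satisfy σ(X_{i+1 mod q}) = X_i for every 0 ≤ i ≤ q−1 is exactly q^s, where s is the number of orbits of ⟨σ⟩ on {1,…,r} (equivalently, the number of cycles of σ, counting fixed points as cycles of length 1). -/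
/-!
Pairwise disjoint families `X : A → Set α` covering `α` are the families of fibers of labelings
`f : α → A`, and `σ '' X i = X (i + c)` for all `i` says that `f (σ a) = f a + c`. The difference
of two such labelings is constant on the cycles of `σ`, so once one of them exists, all of them
arise by adding to it an arbitrary function of the cycle. One exists as soon as the length of
every cycle kills `c`: fix a representative `x` of each cycle and label `σ ^ n x` by `n • c`.
The theorem is the case `A = ZMod q`, `c = -1`.
-/

open Equiv Function Set

variable {α β ι A : Type*} {σ : Perm α}

theorem sameCycle_setoid_le_ker_iff {f : α → β} :
    Perm.SameCycle.setoid σ ≤ Setoid.ker f ↔ ∀ a, f (σ a) = f a := by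
  refine ⟨fun h a ↦ (h (Perm.sameCycle_apply_right.2 (.refl σ a))).symm, ?_⟩
  rintro h a _ ⟨n, rfl⟩
  rw [Setoid.ker_def]
  induction n generalizing a with
  | zero => rfl
  | succ n ih => rw [zpow_add_one, Perm.mul_apply, ← ih, h]
  | pred n ih =>
    rw [zpow_sub_one, Perm.mul_apply, ← ih]
    simpa using h (σ⁻¹ a)

theorem card_filter_sameCycle [Fintype α] [DecidableRel σ.SameCycle] (a : α) :
    (Finset.univ.filter fun b ↦ σ.SameCycle a b).card = minimalPeriod σ a := by
  have orbit_eq : MulAction.orbit (Subgroup.zpowers σ) a = {b | σ.SameCycle a b} := by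
    ext b
    exact ⟨fun ⟨⟨_, n, rfl⟩, hn⟩ ↦ ⟨n, hn⟩, fun ⟨n, hn⟩ ↦ ⟨⟨σ ^ n, n, rfl⟩, hn⟩⟩
  calc (Finset.univ.filter fun b ↦ σ.SameCycle a b).card
      = Nat.card (MulAction.orbit (Subgroup.zpowers σ) a) := by
        rw [orbit_eq, Nat.card_eq_fintype_card, ← Fintype.card_subtype]; rfl
    _ = minimalPeriod σ a := by
        rw [Nat.card_congr (MulAction.orbitZPowersEquiv σ a), Nat.card_zmod]; rfl

theorem enatCard_quotient_eq_card_image_filter [Fintype α] [DecidableEq α] {r : α → α → Prop}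
    [DecidableRel r] (hr : Equivalence r) :
    ENat.card (Quotient ⟨r, hr⟩) =
      (Finset.univ.image fun a ↦ Finset.univ.filter fun b ↦ r a b).card := by
  let cls (a : α) : Finset α := Finset.univ.filter fun b ↦ r a b
  have ker_cls : Setoid.ker cls = ⟨r, hr⟩ := by
    ext a b
    refine ⟨fun h ↦ ?_, fun h ↦ Finset.filter_congr fun x _ ↦ ?_⟩
    · have b_mem : b ∈ cls a := by simpa [Setoid.ker_def.1 h, cls] using hr.refl b
      simpa [cls] using b_mem
    · exact ⟨hr.trans (hr.symm h), hr.trans h⟩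
  calc ENat.card (Quotient ⟨r, hr⟩)
      = (range cls).encard := by
        rw [← ker_cls, ENat.card_congr (Setoid.quotientKerEquivRange cls), ENat.card_coe_set_eq]
    _ = (Finset.univ.image cls).card := by
        rw [← encard_coe_eq_coe_finsetCard, Finset.coe_image, Finset.coe_univ, image_univ]

theorem enatCard_quotient_sameCycle [Fintype α] [DecidableEq α] (σ : Perm α)
    [DecidableRel σ.SameCycle] :
    ENat.card (Quotient (Perm.SameCycle.setoid σ)) =
      (Finset.univ.image fun a ↦ Finset.univ.filter fun b ↦ σ.SameCycle a b).card :=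
  enatCard_quotient_eq_card_image_filter (Perm.SameCycle.equivalence σ)

section Labelings

variable [AddGroup A] {c : A}

theorem semiconj_add_right_iff_le_ker_sub {f f₀ : α → A} (h₀ : Semiconj f₀ σ (· + c)) :
    Semiconj f σ (· + c) ↔ Perm.SameCycle.setoid σ ≤ Setoid.ker (f - f₀) := by
  simp [sameCycle_setoid_le_ker_iff, Semiconj, sub_eq_iff_eq_add, ← add_assoc, h₀.eq]

/-- The labelings `f` with `f (σ a) = f a + c`, once a base point `f₀` among them is chosen, are
parametrized by the functions on the set of cycles of `σ`: `f` corresponds to `f - f₀`. -/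
def semiconjAddRightEquiv {f₀ : α → A} (h₀ : Semiconj f₀ σ (· + c)) :
    {f : α → A // Semiconj f σ (· + c)} ≃ (Quotient (Perm.SameCycle.setoid σ) → A) :=
  ((Equiv.subRight f₀).subtypeEquiv fun _ ↦ semiconj_add_right_iff_le_ker_sub h₀).trans
    (Setoid.liftEquiv _)

theorem zsmul_eq_zero_of_zpow_apply_eq {a : α} (h : minimalPeriod σ a • c = 0) {n : ℤ}
    (hn : (σ ^ n) a = a) : n • c = 0 := by
  obtain ⟨k, rfl⟩ := (MulAction.zpow_smul_eq_iff_minimalPeriod_dvd (a := σ) (b := a)).1 hn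
  rw [mul_comm, mul_zsmul, natCast_zsmul]
  exact (congrArg (k • ·) h).trans (zsmul_zero k)

theorem exists_semiconj_add_right (h : ∀ a, minimalPeriod σ a • c = 0) :
    ∃ f : α → A, Semiconj f σ (· + c) := by
  let rep (a : α) : α := (Quotient.mk (Perm.SameCycle.setoid σ) a).out
  have rep_apply (a : α) : rep (σ a) = rep a :=
    congrArg Quotient.out (Quotient.sound (Perm.sameCycle_apply_left.2 (.refl σ a)))
  have rep_sameCycle (a : α) : σ.SameCycle (rep a) a :=
    Quotient.mk_out (s := Perm.SameCycle.setoid σ) a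
  choose n hn using rep_sameCycle
  refine ⟨fun a ↦ n a • c, fun a ↦ ?_⟩
  have hn_apply : (σ ^ n (σ a)) (rep a) = σ a := by rw [← rep_apply, hn]
  have fixes_rep : (σ ^ (-(n a + 1) + n (σ a))) (rep a) = rep a := by
    rw [zpow_add, Perm.mul_apply, hn_apply, zpow_neg, Perm.inv_eq_iff_eq, add_comm, zpow_one_add,
      Perm.mul_apply, hn]
  have zsmul_eq_zero := zsmul_eq_zero_of_zpow_apply_eq (h _) fixes_rep
  rw [add_zsmul, neg_zsmul, neg_add_eq_zero, add_one_zsmul] at zsmul_eq_zero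
  exact zsmul_eq_zero.symm

end Labelings

theorem pairwise_disjoint_and_iUnion_eq_univ_iff_exists_fibers {X : ι → Set α} :
    Pairwise (Disjoint on X) ∧ ⋃ i, X i = univ ↔ ∃ f : α → ι, (f ⁻¹' {·}) = X := by
  constructor
  · rintro ⟨hd, hc⟩
    choose f hf using iUnion_eq_univ_iff.1 hc
    refine ⟨f, funext fun i ↦ Set.ext fun a ↦ ⟨fun h ↦ h ▸ hf a, fun h ↦ ?_⟩⟩
    exact hd.eq (not_disjoint_iff.2 ⟨a, hf a, h⟩)
  · rintro ⟨f, rfl⟩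
    exact ⟨pairwise_disjoint_fiber f, iUnion_eq_univ_iff.2 fun a ↦ ⟨f a, rfl⟩⟩

theorem injective_fibers : Injective fun (f : α → ι) (i : ι) ↦ f ⁻¹' {i} := by
  intro f g h
  funext a
  have mem_fiber : a ∈ g ⁻¹' {f a} := (congrFun h (f a)).subset rfl
  exact mem_fiber.symm

/-- A partition of `α` into possibly empty parts indexed by `A`, on whose indices `σ` acts as
translation by `c`. The tuples of `stmt7` have `σ (X (i + c)) = X i` with `c = 1`, and are thus
the equivariant partitions for `-c`. -/
structure IsEquivariantPartition [Add A] (σ : Perm α) (c : A) (X : A → Set α) : Prop where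
  pairwise_disjoint : Pairwise (Disjoint on X)
  iUnion_eq_univ : ⋃ i, X i = univ
  image_eq (i : A) : σ '' X i = X (i + c)

section EquivariantPartitions

variable [AddGroup A] {c : A}

theorem forall_image_fiber_eq_iff_semiconj {f : α → A} :
    (∀ i, σ '' (f ⁻¹' {i}) = f ⁻¹' {i + c}) ↔ Semiconj f σ (· + c) := by
  simp_rw [← σ.eq_preimage_iff_image_eq, Set.ext_iff, mem_preimage, mem_singleton_iff]
  refine ⟨fun h a ↦ (h (f a) a).1 rfl, fun h i a ↦ ?_⟩
  rw [h.eq, add_left_inj]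

theorem setOf_isEquivariantPartition (σ : Perm α) (c : A) :
    {X | IsEquivariantPartition σ c X} =
      (fun f i ↦ f ⁻¹' {i}) '' {f : α → A | Semiconj f σ (· + c)} := by
  ext X
  constructor
  · rintro ⟨hd, hc, himage⟩
    obtain ⟨f, rfl⟩ := pairwise_disjoint_and_iUnion_eq_univ_iff_exists_fibers.1 ⟨hd, hc⟩
    exact ⟨f, forall_image_fiber_eq_iff_semiconj.1 himage, rfl⟩
  · rintro ⟨f, hf, rfl⟩
    obtain ⟨hd, hc⟩ := pairwise_disjoint_and_iUnion_eq_univ_iff_exists_fibers.2 ⟨f, rfl⟩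
    exact ⟨hd, hc, forall_image_fiber_eq_iff_semiconj.2 hf⟩

theorem isEquivariantPartition_neg_coe_iff [DecidableEq α] {X : A → Finset α} :
    IsEquivariantPartition σ (-c) (fun i ↦ (X i : Set α)) ↔
      (∀ i j, i ≠ j → Disjoint (X i) (X j)) ∧ (∀ a, ∃ i, a ∈ X i) ∧
        ∀ i, (X (i + c)).image σ = X i := by
  have image_eq_iff : (∀ i, σ '' X i = X (i + -c)) ↔ ∀ i, (X (i + c)).image σ = X i := by
    rw [← (Equiv.addRight c).forall_congr_right]
    simp [← Finset.coe_inj]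
  have disjoint_iff : Pairwise (Disjoint on fun i ↦ (X i : Set α)) ↔
      ∀ i j, i ≠ j → Disjoint (X i) (X j) := by
    simp only [Pairwise, onFun, Finset.disjoint_coe]
  rw [← disjoint_iff, ← image_eq_iff]
  exact ⟨fun ⟨hd, hc, himage⟩ ↦ ⟨hd, iUnion_eq_univ_iff.1 hc, himage⟩,
    fun ⟨hd, hc, himage⟩ ↦ ⟨hd, iUnion_eq_univ_iff.2 hc, himage⟩⟩

theorem encard_setOf_finset_eq [Finite α] [DecidableEq α] (σ : Perm α) (c : A) :
    {X : A → Finset α | (∀ i j, i ≠ j → Disjoint (X i) (X j)) ∧ (∀ a, ∃ i, a ∈ X i) ∧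
        ∀ i, (X (i + c)).image σ = X i}.encard =
      {X : A → Set α | IsEquivariantPartition σ (-c) X}.encard := by
  have := Fintype.ofFinite α
  simp_rw [← isEquivariantPartition_neg_coe_iff]
  exact encard_preimage_of_bijective (Equiv.piCongrRight fun _ ↦ Fintype.finsetEquivSet).bijective _

/- An infinite cycle has `minimalPeriod` equal to `0`, so `h` rightly imposes nothing on it. -/
theorem stmt7_general (h : ∀ a, minimalPeriod σ a • c = 0) :
    {X : A → Set α | IsEquivariantPartition σ c X}.encard =
      ENat.card A ^ ENat.card (Quotient (Perm.SameCycle.setoid σ)) := by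
  obtain ⟨f₀, h₀⟩ := exists_semiconj_add_right h
  rw [setOf_isEquivariantPartition, injective_fibers.encard_image, ← ENat.card_fun]
  exact ENat.card_congr (semiconjAddRightEquiv h₀)

end EquivariantPartitions

/-- Let `q, r` be positive integers and `σ` a permutation of `{1,…,r}`
such that `q` divides the cardinality of every orbit of `⟨σ⟩` (every cycle length of
`σ`, counting fixed points as cycles of length 1).  Then the number of tuples
`(X_0, …, X_{q-1})` of pairwise disjoint subsets of `{1,…,r}` covering `{1,…,r}` with
`σ (X_{i+1}) = X_i` (indices mod `q`) for all `i` is exactly `q ^ s`, where `s` is the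
number of orbits of `⟨σ⟩` on `{1,…,r}`. -/
theorem stmt7 (q r : ℕ) (hq : 0 < q) (hr : 0 < r) (σ : Equiv.Perm (Fin r))
    (hdvd : ∀ a : Fin r, q ∣ (Finset.univ.filter fun b => σ.SameCycle a b).card) :
    Set.ncard {X : ZMod q → Finset (Fin r) |
        (∀ i j : ZMod q, i ≠ j → Disjoint (X i) (X j)) ∧
        (∀ a : Fin r, ∃ i : ZMod q, a ∈ X i) ∧
        (∀ i : ZMod q, (X (i + 1)).image σ = X i)} =
      q ^ (Finset.univ.image fun a : Fin r =>
        Finset.univ.filter fun b => σ.SameCycle a b).card := by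
  have : NeZero q := ⟨hq.ne'⟩
  rw [ncard_def, encard_setOf_finset_eq, stmt7_general fun a ↦ ?_, enatCard_quotient_sameCycle]
  · simp
  · simpa [← card_filter_sameCycle, ZMod.natCast_eq_zero_iff] using hdvd a
end
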